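/- arXiv:2407.04924 — 7 statements merged into one kernel-verified Lean document; each statement's English description precedes it below -/
import Mathlib

section
/- Let B be a finite structure in a finite relational signature. Then the following are equivalent: (i) B has a quasi Maltsev polymorphism and, for all n,k ≥ 1, a k-absorptive polymorphism of arity nk; (ii) B is homomorphically equivalent to a finite structure B' in the same signature that has a quasi Maltsev polymorphism and binary polymorphisms ⊔ and ⊓ such that (B', ⊔, ⊓) is a distributive lattice. -/
structure RelStruct (σ : Type) (ar : σ → ℕ) (B : Type) where
  rel : ∀ s : σ, Set (Fin (ar s) → B)

/-- `h` is a homomorphism from the structure `SA` to the structure `SB`. -/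
def IsHom {σ : Type} {ar : σ → ℕ} {A B : Type}
    (SA : RelStruct σ ar A) (SB : RelStruct σ ar B) (h : A → B) : Prop :=
  ∀ (s : σ) (t : Fin (ar s) → A), t ∈ SA.rel s → (fun i => h (t i)) ∈ SB.rel s

/-- `f` is a polymorphism of `S` whose arguments are indexed by the type `I`
(for `I = Fin n × Fin k` this is a polymorphism of arity `n * k`). -/
def IsPolyIdx {σ : Type} {ar : σ → ℕ} {B : Type} (S : RelStruct σ ar B)
    {I : Type} (f : (I → B) → B) : Prop :=
  ∀ (s : σ) (t : I → Fin (ar s) → B),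
    (∀ i, t i ∈ S.rel s) → (fun j => f fun i => t i j) ∈ S.rel s

/-- a ternary operation written in curried form is a polymorphism of `S`. -/
def IsPoly3 {σ : Type} {ar : σ → ℕ} {B : Type} (S : RelStruct σ ar B)
    (m : B → B → B → B) : Prop :=
  ∀ (s : σ) (t₁ t₂ t₃ : Fin (ar s) → B), t₁ ∈ S.rel s → t₂ ∈ S.rel s → t₃ ∈ S.rel s →
    (fun j => m (t₁ j) (t₂ j) (t₃ j)) ∈ S.rel s

/-- a quasi Maltsev operation: `m x x y = m y x x = m y y y`. -/
def IsQuasiMaltsev {B : Type} (m : B → B → B → B) : Prop :=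
  ∀ x y, m x x y = m y x x ∧ m y x x = m y y y

/-- An operation of arity `n * k` (arguments grouped into `n` blocks of length `k`,
presented as a matrix `Fin n → Fin k → B`) is `k`-block symmetric if its value only
depends on the multiset of sets of entries of the blocks. -/
def BlockSym {B : Type} (n k : ℕ) (f : (Fin n → Fin k → B) → B) : Prop :=
  ∀ x y : Fin n → Fin k → B,
    Multiset.map (fun i => Set.range (x i)) Finset.univ.val =
      Multiset.map (fun i => Set.range (y i)) Finset.univ.val →
    f x = f y

/-- A `k`-block symmetric operation is `k`-absorptive if
`f(S₁,S₂,S₃,…,Sₙ) = f(S₂,S₂,S₃,…,Sₙ)` whenever `S₂ ⊆ S₁` (stated here for an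
arbitrary pair of distinct blocks, which by block symmetry is equivalent). -/
def IsAbsorptive {B : Type} (n k : ℕ) (f : (Fin n → Fin k → B) → B) : Prop :=
  BlockSym n k f ∧
  ∀ (x : Fin n → Fin k → B) (i j : Fin n), i ≠ j →
    Set.range (x j) ⊆ Set.range (x i) → f x = f (Function.update x i (x j))

/-- A block operation (matrix form `Fin n → Fin k → B`) is a polymorphism of arity
`n * k` of `S`, identifying `B^(n·k)` with `Fin n × Fin k → B`. -/
def IsBlockPoly {σ : Type} {ar : σ → ℕ} {B : Type} (S : RelStruct σ ar B)
    (n k : ℕ) (f : (Fin n → Fin k → B) → B) : Prop :=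
  IsPolyIdx S (fun v : Fin n × Fin k → B => f fun i j => v (i, j))

/-!
The quasi Maltsev condition is a system of height-one identities, so it passes to homomorphically
equivalent structures by conjugation with the two homomorphisms. So do absorptive polymorphisms, and
on a lattice `⨆ i, ⨅ j, x i j` is absorptive because enlarging a block lowers its meet.

Conversely, let `B'` carry the sublattices generated by the relations of `B` inside the powers of
the free distributive lattice over `B`, realised in `Set (Set B)`. Every element in question is a
join of meets `⨆ i, ⨅ j, x i j` of generators, and it is sent back to `f (x, x)`, where `f` is an
absorptive polymorphism with twice as many blocks as `x`. This is well defined: if `x` and `y`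
present the same element, then every block of `y` contains a block of `x` and conversely, so that
absorption against the half that stays fixed gives `f (x, x) = f (x, y) = f (y, y)`.
The matrices needed grow with the arities of the relation symbols. Finitely many symbols are thus
treated at once, and compactness extends the result to all of them.
-/

/-! ### Homomorphic equivalence -/

/-- Existence of a quasi Maltsev polymorphism. -/
def HasQuasiMaltsev {σ : Type} {ar : σ → ℕ} {B : Type} (S : RelStruct σ ar B) : Prop :=
  ∃ m : B → B → B → B, IsQuasiMaltsev m ∧ IsPoly3 S m

/-- Existence of `k`-absorptive polymorphisms of arity `n * k` for all positive `n` and `k`. -/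
def HasAbsorptive {σ : Type} {ar : σ → ℕ} {B : Type} (S : RelStruct σ ar B) : Prop :=
  ∀ n k : ℕ, 1 ≤ n → 1 ≤ k →
    ∃ f : (Fin n → Fin k → B) → B, IsAbsorptive n k f ∧ IsBlockPoly S n k f

section Transfer

variable {σ : Type} {ar : σ → ℕ} {A B : Type} {SA : RelStruct σ ar A} {SB : RelStruct σ ar B}
  {h : A → B} {g : B → A} {n k : ℕ} {f : (Fin n → Fin k → A) → A}

theorem HasQuasiMaltsev.of_homEquiv (hm : HasQuasiMaltsev SA) (hh : IsHom SA SB h)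
    (hg : IsHom SB SA g) : HasQuasiMaltsev SB := by
  obtain ⟨m, hm, hp⟩ := hm
  refine ⟨fun x y z => h (m (g x) (g y) (g z)), fun x y => ?_, fun s t₁ t₂ t₃ h₁ h₂ h₃ => ?_⟩
  · exact ⟨congrArg h (hm _ _).1, congrArg h (hm _ _).2⟩
  · exact hh s _ (hp s _ _ _ (hg s _ h₁) (hg s _ h₂) (hg s _ h₃))

theorem IsAbsorptive.conj (hf : IsAbsorptive n k f) (h : A → B) (g : B → A) :
    IsAbsorptive n k fun x => h (f fun i => g ∘ x i) := by
  refine ⟨fun x y hxy => congrArg h (hf.1 _ _ ?_), fun x i j hij hx => congrArg h ?_⟩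
  · simpa only [Multiset.map_map, Function.comp_def, ← Set.range_comp] using
      congrArg (Multiset.map (g '' ·)) hxy
  · rw [hf.2 (fun i => g ∘ x i) i j hij (by simpa only [Set.range_comp] using Set.image_mono hx)]
    congr 1
    exact (Function.comp_update (g ∘ ·) x i (x j)).symm

theorem IsBlockPoly.conj (hf : IsBlockPoly SA n k f) (hh : IsHom SA SB h) (hg : IsHom SB SA g) :
    IsBlockPoly SB n k fun x => h (f fun i => g ∘ x i) :=
  fun s _ ht => hh s _ (hf s _ fun q => hg s _ (ht q))

theorem HasAbsorptive.of_homEquiv (H : HasAbsorptive SA) (hh : IsHom SA SB h)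
    (hg : IsHom SB SA g) : HasAbsorptive SB := by
  intro n k hn hk
  obtain ⟨f, hf, hp⟩ := H n k hn hk
  exact ⟨_, hf.conj h g, hp.conj hh hg⟩

theorem exists_isHom_of_forall_finset [Finite A] [Finite B]
    (H : ∀ T : Finset σ, ∃ h : A → B, ∀ s ∈ T, ∀ t ∈ SA.rel s, h ∘ t ∈ SB.rel s) :
    ∃ h, IsHom SA SB h := by
  classical
  have := Fintype.ofFinite (A → B)
  by_contra! hno
  simp only [IsHom, not_forall] at hno
  choose s t ht hst using hno
  obtain ⟨h, hh⟩ := H (Finset.univ.image s)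
  exact hst h (hh (s h) (Finset.mem_image_of_mem s (Finset.mem_univ h)) (t h) (ht h))

end Transfer

/-! ### Joins of meets -/

/-- The lattice term `⨆ i, ⨅ j, x i j` in the entries of a matrix `x` with finitely many entries,
whose rows play the role of the blocks of an absorptive operation. -/
def supInf {L I K : Type*} [Lattice L] [Fintype I] [Nonempty I] [Fintype K] [Nonempty K]
    (x : I → K → L) : L :=
  Finset.univ.sup' Finset.univ_nonempty fun i =>
    Finset.univ.inf' Finset.univ_nonempty fun j => x i j

section SupInf

variable {L I K : Type*} [Lattice L] [Fintype I] [Nonempty I] [Fintype K] [Nonempty K]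

theorem supInf_le_supInf {x y : I → K → L}
    (h : ∀ i, ∃ i', Set.range (y i') ⊆ Set.range (x i)) : supInf x ≤ supInf y := by
  refine Finset.sup'_le _ _ fun i _ => ?_
  obtain ⟨i', hi'⟩ := h i
  refine le_trans (Finset.le_inf' _ _ fun j _ => ?_)
    (Finset.le_sup' (fun i => Finset.univ.inf' Finset.univ_nonempty (y i)) (Finset.mem_univ i'))
  obtain ⟨j', hj'⟩ := hi' ⟨j, rfl⟩
  rw [← hj']
  exact Finset.inf'_le _ (Finset.mem_univ j')

theorem supInf_apply {P : Type*} (x : I → K → P → L) (p : P) :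
    supInf x p = supInf fun i j => x i j p := by
  simp only [supInf, Finset.sup'_apply, Finset.inf'_apply]

theorem supInf_mem_of_isSublattice {R : Set L} (hR : IsSublattice R) {x : I → K → L}
    (hx : ∀ i j, x i j ∈ R) : supInf x ∈ R :=
  Finset.sup'_induction _ _ hR.supClosed fun i _ =>
    Finset.inf'_induction _ _ hR.infClosed fun j _ => hx i j

end SupInf

theorem isAbsorptive_supInf {L : Type} [Lattice L] (n k : ℕ) [NeZero n] [NeZero k] :
    IsAbsorptive n k (supInf : (Fin n → Fin k → L) → L) := by
  have le_of_map_eq : ∀ x y : Fin n → Fin k → L,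
      Multiset.map (fun i => Set.range (x i)) Finset.univ.val =
        Multiset.map (fun i => Set.range (y i)) Finset.univ.val → supInf x ≤ supInf y := by
    intro x y hxy
    refine supInf_le_supInf fun i => ?_
    have hi := Multiset.mem_map_of_mem (fun i => Set.range (x i)) (Finset.mem_univ_val i)
    obtain ⟨i', -, hi'⟩ := Multiset.mem_map.1 (hxy ▸ hi)
    exact ⟨i', hi'.le⟩
  refine ⟨fun x y hxy => (le_of_map_eq x y hxy).antisymm (le_of_map_eq y x hxy.symm),
    fun x i j hij hx => le_antisymm (supInf_le_supInf fun a => ?_) (supInf_le_supInf fun a => ?_)⟩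
  · obtain rfl | ha := eq_or_ne a i
    · exact ⟨j, by rwa [Function.update_of_ne hij.symm]⟩
    · exact ⟨a, by rw [Function.update_of_ne ha]⟩
  · obtain rfl | ha := eq_or_ne a i
    · exact ⟨j, by rw [Function.update_self]⟩
    · exact ⟨a, by rw [Function.update_of_ne ha]⟩

theorem hasAbsorptive_of_isSublattice {σ : Type} {ar : σ → ℕ} {L : Type} [Lattice L]
    {S : RelStruct σ ar L} (hS : ∀ s, IsSublattice (S.rel s)) : HasAbsorptive S := by
  intro n k hn hk
  have : NeZero n := ⟨by lia⟩
  have : NeZero k := ⟨by lia⟩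
  refine ⟨supInf, isAbsorptive_supInf n k, fun s t ht => ?_⟩
  convert supInf_mem_of_isSublattice (hS s) (x := fun i j => t (i, j)) fun i j => ht (i, j) using 1
  exact funext fun p => (supInf_apply _ p).symm

theorem exists_image_univ_fin_eq {A : Type*} [DecidableEq A] {N : ℕ} {s : Finset A}
    (hs : s.Nonempty) (hN : s.card ≤ N) : ∃ e : Fin N → A, Finset.univ.image e = s := by
  have := hs.to_subtype
  have hinj : Function.Injective (Fin.castLE hN ∘ s.equivFin) :=
    (Fin.castLE_injective hN).comp s.equivFin.injective
  refine ⟨Subtype.val ∘ Function.invFun (Fin.castLE hN ∘ s.equivFin), ?_⟩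
  rw [← Finset.image_image, Finset.image_univ_of_surjective (Function.invFun_surjective hinj)]
  exact s.attach_image_val

theorem exists_supInf_eq_of_mem_latticeClosure {L : Type*} [DistribLattice L] [Finite L] {N : ℕ}
    [NeZero N] (hN : Nat.card L ≤ N) {R : Set L} {a : L} (ha : a ∈ latticeClosure R) :
    ∃ x : Fin N → Fin N → L, (∀ i j, x i j ∈ R) ∧ supInf x = a := by
  classical
  have := Fintype.ofFinite L
  have card_le (s : Finset L) : s.card ≤ N :=
    s.card_le_univ.trans (Nat.card_eq_fintype_card (α := L) ▸ hN)
  rw [← supClosure_infClosure] at ha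
  obtain ⟨s, hs, hsR, rfl⟩ := ha
  obtain ⟨e, rfl⟩ := exists_image_univ_fin_eq hs (card_le s)
  have exists_row : ∀ i, ∃ x : Fin N → L,
      (∀ j, x j ∈ R) ∧ Finset.univ.inf' Finset.univ_nonempty x = e i := by
    intro i
    obtain ⟨t, ht, htR, hte⟩ := hsR (Finset.mem_image_of_mem e (Finset.mem_univ i))
    obtain ⟨x, rfl⟩ := exists_image_univ_fin_eq ht (card_le t)
    exact ⟨x, fun j => htR (Finset.mem_image_of_mem x (Finset.mem_univ j)), by
      rw [← hte, Finset.inf'_image, Function.id_comp]⟩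
  choose x hxR hx using exists_row
  exact ⟨x, hxR, by simp only [supInf, hx, Finset.sup'_image, Function.id_comp]⟩

/-! ### Absorption in several blocks -/

namespace IsAbsorptive

section Blocks

variable {B : Type} {n k : ℕ} {f : (Fin n → Fin k → B) → B}

theorem apply_update_of_surjective (hf : IsAbsorptive n k f) {e : Fin k → B}
    (he : Function.Surjective e) {x : Fin n → Fin k → B} {i j : Fin n} (hij : i ≠ j)
    (hx : Set.range (x j) ⊆ Set.range (x i)) : f (Function.update x i e) = f x := by
  rw [hf.2 x i j hij hx, hf.2 (Function.update x i e) i j hij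
    (by rw [Function.update_self, he.range_eq]; exact Set.subset_univ _),
    Function.update_idem, Function.update_of_ne hij.symm]

theorem apply_eq_of_exists_common_block (hf : IsAbsorptive n k f) {e : Fin k → B}
    (he : Function.Surjective e) {x y : Fin n → Fin k → B}
    (hxy : ∀ i, x i = y i ∨ (∃ j, x j = y j ∧ Set.range (x j) ⊆ Set.range (x i)) ∧
      ∃ j, x j = y j ∧ Set.range (x j) ⊆ Set.range (y i)) : f x = f y := by
  have apply_piecewise : ∀ s : Finset (Fin n), f (s.piecewise y x) = f x := by
    intro s
    induction s using Finset.induction_on with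
    | empty => rw [Finset.piecewise_empty]
    | insert i s hi ih =>
      set z := s.piecewise y x with hz
      have hzi : z i = x i := Finset.piecewise_eq_of_notMem _ _ _ hi
      have hzj : ∀ j, x j = y j → z j = x j := fun j hj => by
        rw [hz, Finset.piecewise, ← hj, ite_self]
      rw [Finset.piecewise_insert, ← ih]
      by_cases hxyi : x i = y i
      · rw [← hxyi, ← hzi, Function.update_eq_self]
      -- Block `i` changes by way of `e`, which contains both of the common blocks.
      obtain ⟨⟨j, hj, hji⟩, j', hj', hji'⟩ := (hxy i).resolve_left hxyi
      have hij : i ≠ j := fun h => hxyi (h ▸ hj)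
      have hij' : i ≠ j' := fun h => hxyi (h ▸ hj')
      calc f (Function.update z i (y i))
          = f (Function.update (Function.update z i (y i)) i e) :=
            (hf.apply_update_of_surjective he hij' (by
              rwa [Function.update_of_ne hij'.symm, Function.update_self, hzj j' hj'])).symm
        _ = f (Function.update z i e) := by rw [Function.update_idem]
        _ = f z := hf.apply_update_of_surjective he hij (by rwa [hzj j hj, hzi])
  simpa only [Finset.piecewise_univ] using (apply_piecewise Finset.univ).symm

end Blocks

theorem apply_append_self_eq {B : Type} {n k : ℕ} {f : (Fin (n + n) → Fin k → B) → B}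
    (hf : IsAbsorptive (n + n) k f) {e : Fin k → B} (he : Function.Surjective e)
    {x y : Fin n → Fin k → B} (hxy : ∀ i, ∃ j, Set.range (x j) ⊆ Set.range (y i))
    (hyx : ∀ i, ∃ j, Set.range (y j) ⊆ Set.range (x i)) :
    f (Fin.append x x) = f (Fin.append y y) := by
  calc f (Fin.append x x) = f (Fin.append x y) := by
        refine hf.apply_eq_of_exists_common_block he
          (Fin.addCases (fun i => Or.inl ?_) fun i => Or.inr ?_)
        · rw [Fin.append_left, Fin.append_left]
        · obtain ⟨j, hj⟩ := hxy i
          simp only [Fin.append_right]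
          exact ⟨⟨Fin.castAdd n i, by simp only [Fin.append_left, subset_rfl, and_self]⟩,
            Fin.castAdd n j, by simpa only [Fin.append_left, true_and] using hj⟩
    _ = f (Fin.append y y) := by
        refine hf.apply_eq_of_exists_common_block he
          (Fin.addCases (fun i => Or.inr ?_) fun i => Or.inl ?_)
        · obtain ⟨j, hj⟩ := hyx i
          simp only [Fin.append_left]
          exact ⟨⟨Fin.natAdd n j, by simpa only [Fin.append_right, true_and] using hj⟩,
            Fin.natAdd n i, by simp only [Fin.append_right, subset_rfl, and_self]⟩
        · rw [Fin.append_right, Fin.append_right]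

end IsAbsorptive

/-! ### The free distributive lattice over a structure -/

/-- The generator `b` of the free distributive lattice over `B`, which is realised as the sublattice
of `Set (Set B)` generated by the sets `{V | b ∈ V}`. -/
def latticeGen {B : Type*} (b : B) : Set (Set B) := {V | b ∈ V}

theorem mem_supInf_latticeGen {B I K : Type*} [Fintype I] [Nonempty I] [Fintype K] [Nonempty K]
    {x : I → K → B} {V : Set B} :
    V ∈ supInf (fun i j => latticeGen (x i j)) ↔ ∃ i, Set.range (x i) ⊆ V := by
  simp only [supInf, Finset.sup'_univ_eq_ciSup, Finset.inf'_univ_eq_ciInf, Set.iSup_eq_iUnion,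
    Set.iInf_eq_iInter, Set.mem_iUnion, Set.mem_iInter, Set.range_subset_iff]
  exact Iff.rfl

theorem exists_range_subset_of_supInf_latticeGen_le {B I K : Type*} [Fintype I] [Nonempty I]
    [Fintype K] [Nonempty K] {x y : I → K → B}
    (h : supInf (fun i j => latticeGen (y i j)) ≤ supInf (fun i j => latticeGen (x i j))) (i : I) :
    ∃ j, Set.range (x j) ⊆ Set.range (y i) :=
  mem_supInf_latticeGen.1 (h (mem_supInf_latticeGen.2 ⟨i, subset_rfl⟩))

section FreeLattice

variable {σ : Type} {ar : σ → ℕ} {B : Type} {S : RelStruct σ ar B}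

/-- The structure on `Set (Set B)` whose relations are the sublattices generated by the relations
of `S` under the embedding of `B` as the set of generators. -/
def RelStruct.freeLattice (S : RelStruct σ ar B) : RelStruct σ ar (Set (Set B)) where
  rel s := latticeClosure ((latticeGen ∘ ·) '' S.rel s)

theorem isHom_latticeGen (S : RelStruct σ ar B) : IsHom S S.freeLattice latticeGen :=
  fun _ _ ht => subset_latticeClosure (Set.mem_image_of_mem _ ht)

theorem exists_matrix_of_mem_freeLattice_rel [Finite B] {N : ℕ} [NeZero N] {s : σ}
    (hN : Nat.card (Fin (ar s) → Set (Set B)) ≤ N) {u : Fin (ar s) → Set (Set B)}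
    (hu : u ∈ S.freeLattice.rel s) :
    ∃ t : Fin N → Fin N → Fin (ar s) → B, (∀ i j, t i j ∈ S.rel s) ∧
      ∀ p, u p = supInf fun i j => latticeGen (t i j p) := by
  obtain ⟨x, hx, rfl⟩ := exists_supInf_eq_of_mem_latticeClosure hN hu
  choose t ht htx using hx
  exact ⟨t, ht, fun p => by simp only [supInf_apply, ← htx, Function.comp_apply]⟩

theorem exists_apply_supInf_latticeGen_eq [Nonempty B] {n k : ℕ} [NeZero n] [NeZero k]
    {f : (Fin (n + n) → Fin k → B) → B} (hf : IsAbsorptive (n + n) k f) {e : Fin k → B}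
    (he : Function.Surjective e) :
    ∃ g : Set (Set B) → B, ∀ x : Fin n → Fin k → B,
      g (supInf fun i j => latticeGen (x i j)) = f (Fin.append x x) := by
  have factors : Function.FactorsThrough (fun x : Fin n → Fin k → B => f (Fin.append x x))
      fun x => supInf fun i j => latticeGen (x i j) := fun x y hxy =>
    hf.apply_append_self_eq he (exists_range_subset_of_supInf_latticeGen_le hxy.ge)
      (exists_range_subset_of_supInf_latticeGen_le hxy.le)
  obtain ⟨g, hg⟩ := (Function.factorsThrough_iff _).1 factors
  exact ⟨g, fun x => (congrFun hg x).symm⟩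

theorem HasAbsorptive.exists_map_freeLattice [Finite B] [Nonempty B] (H : HasAbsorptive S)
    (T : Finset σ) :
    ∃ g : Set (Set B) → B, ∀ s ∈ T, ∀ u ∈ S.freeLattice.rel s, g ∘ u ∈ S.rel s := by
  classical
  have := Fintype.ofFinite B
  let N := Fintype.card B + ∑ s ∈ T, Nat.card (Fin (ar s) → Set (Set B))
  have hBN : Fintype.card B ≤ N := Nat.le_add_right _ _
  have hTN : ∀ s ∈ T, Nat.card (Fin (ar s) → Set (Set B)) ≤ N := fun s hs =>
    (Finset.single_le_sum (f := fun s => Nat.card (Fin (ar s) → Set (Set B)))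
      (fun _ _ => Nat.zero_le _) hs).trans (Nat.le_add_left _ _)
  have hN : 1 ≤ N := Fintype.card_pos.trans_le hBN
  have : NeZero N := ⟨by lia⟩
  obtain ⟨f, hf, hp⟩ := H (N + N) N (by lia) hN
  obtain ⟨e, he⟩ := exists_image_univ_fin_eq (Finset.univ_nonempty (α := B)) hBN
  have he_surj : Function.Surjective e := fun b =>
    mem_image_univ_iff_mem_range.1 (he ▸ Finset.mem_univ b)
  obtain ⟨g, hg⟩ := exists_apply_supInf_latticeGen_eq hf he_surj
  refine ⟨g, fun s hs u hu => ?_⟩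
  obtain ⟨t, ht, hut⟩ := exists_matrix_of_mem_freeLattice_rel (hTN s hs) hu
  have hgu : g ∘ u = fun p => f fun a b => Fin.append t t a b p := by
    funext p
    rw [Function.comp_apply, hut p, hg]
    congr 1
    funext a
    induction a using Fin.addCases <;> simp only [Fin.append_left, Fin.append_right]
  rw [hgu]
  refine hp s (fun q => Fin.append t t q.1 q.2) fun ⟨a, b⟩ => ?_
  induction a using Fin.addCases <;> simpa only [Fin.append_left, Fin.append_right] using ht _ b

theorem HasAbsorptive.exists_isHom_freeLattice [Finite B] [Nonempty B] (H : HasAbsorptive S) :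
    ∃ g, IsHom S.freeLattice S g :=
  exists_isHom_of_forall_finset H.exists_map_freeLattice

theorem HasAbsorptive.exists_homEquiv_isSublattice [Finite B] (H : HasAbsorptive S) :
    ∃ (B' : Type) (_ : Finite B') (S' : RelStruct σ ar B'),
      (∃ h, IsHom S S' h) ∧ (∃ h, IsHom S' S h) ∧
      ∃ _ : DistribLattice B', ∀ s, IsSublattice (S'.rel s) := by
  rcases isEmpty_or_nonempty B with hB | hB
  · -- No map from `Set (Set B)` to an empty `B` exists, so `B` itself serves as the lattice.
    classical
    let _ : LinearOrder B := linearOrderOfSTO WellOrderingRel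
    refine ⟨B, inferInstance, S, ⟨id, fun _ _ => id⟩, ⟨id, fun _ _ => id⟩, inferInstance,
      fun s => ⟨fun t₁ h₁ t₂ _ => ?_, fun t₁ h₁ t₂ _ => ?_⟩⟩
    · rwa [Subsingleton.elim (t₁ ⊔ t₂) t₁]
    · rwa [Subsingleton.elim (t₁ ⊓ t₂) t₁]
  · exact ⟨Set (Set B), inferInstance, S.freeLattice, ⟨_, isHom_latticeGen S⟩,
      H.exists_isHom_freeLattice, inferInstance, fun _ => isSublattice_latticeClosure⟩

end FreeLattice

theorem quasiMaltsev_and_absorptive_iff_homEquiv_lattice_general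
    {σ : Type} {ar : σ → ℕ} {B : Type} [Finite B] (S : RelStruct σ ar B) :
    (HasQuasiMaltsev S ∧ HasAbsorptive S) ↔
    ∃ (B' : Type) (_ : Fintype B') (S' : RelStruct σ ar B'),
      (∃ h, IsHom S S' h) ∧ (∃ h, IsHom S' S h) ∧ HasQuasiMaltsev S' ∧
      ∃ L : DistribLattice B',
        (∀ (s : σ) (t₁ t₂ : Fin (ar s) → B'), t₁ ∈ S'.rel s → t₂ ∈ S'.rel s →
          (fun j => L.sup (t₁ j) (t₂ j)) ∈ S'.rel s) ∧
        (∀ (s : σ) (t₁ t₂ : Fin (ar s) → B'), t₁ ∈ S'.rel s → t₂ ∈ S'.rel s →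
          (fun j => L.inf (t₁ j) (t₂ j)) ∈ S'.rel s) := by
  constructor
  · rintro ⟨hm, H⟩
    obtain ⟨B', _, S', ⟨h, hh⟩, ⟨g, hg⟩, L, hL⟩ := H.exists_homEquiv_isSublattice
    exact ⟨B', Fintype.ofFinite B', S', ⟨h, hh⟩, ⟨g, hg⟩, hm.of_homEquiv hh hg, L,
      fun s _ _ h₁ h₂ => (hL s).supClosed h₁ h₂, fun s _ _ h₁ h₂ => (hL s).infClosed h₁ h₂⟩
  · rintro ⟨B', _, S', ⟨g, hg⟩, ⟨h, hh⟩, hm, L, hsup, hinf⟩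
    have hL : ∀ s, IsSublattice (S'.rel s) := fun s =>
      ⟨fun t₁ h₁ t₂ h₂ => hsup s t₁ t₂ h₁ h₂, fun t₁ h₁ t₂ h₂ => hinf s t₁ t₂ h₁ h₂⟩
    exact ⟨hm.of_homEquiv hh hg, (hasAbsorptive_of_isSublattice hL).of_homEquiv hh hg⟩

/-- Theorem: a finite structure `B` in a finite relational signature has a quasi
Maltsev polymorphism and `k`-absorptive polymorphisms of arity `n * k` for all
`n, k ≥ 1` if and only if `B` is homomorphically equivalent to a finite structure `B'`
in the same signature that has a quasi Maltsev polymorphism and binary polymorphisms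
`⊔` and `⊓` making `B'` a distributive lattice. -/
theorem quasiMaltsev_and_absorptive_iff_homEquiv_lattice
    {σ : Type} [Fintype σ] {ar : σ → ℕ} {B : Type} [Fintype B]
    (S : RelStruct σ ar B) :
    ((∃ m : B → B → B → B, IsQuasiMaltsev m ∧ IsPoly3 S m) ∧
      ∀ n k : ℕ, 1 ≤ n → 1 ≤ k →
        ∃ f : (Fin n → Fin k → B) → B, IsAbsorptive n k f ∧ IsBlockPoly S n k f) ↔
    (∃ (B' : Type) (_ : Fintype B') (S' : RelStruct σ ar B'),
      (∃ h, IsHom S S' h) ∧ (∃ h, IsHom S' S h) ∧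
      (∃ m : B' → B' → B' → B', IsQuasiMaltsev m ∧ IsPoly3 S' m) ∧
      ∃ L : DistribLattice B',
        (∀ (s : σ) (t₁ t₂ : Fin (ar s) → B'), t₁ ∈ S'.rel s → t₂ ∈ S'.rel s →
          (fun j => L.sup (t₁ j) (t₂ j)) ∈ S'.rel s) ∧
        (∀ (s : σ) (t₁ t₂ : Fin (ar s) → B'), t₁ ∈ S'.rel s → t₂ ∈ S'.rel s →
          (fun j => L.inf (t₁ j) (t₂ j)) ∈ S'.rel s)) :=
  quasiMaltsev_and_absorptive_iff_homEquiv_lattice_general S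
end

section
/- Let B be a finite structure in a finite relational signature and let F be a class of finite structures of the same signature such that (F, B) is a duality pair. Let F' := {F ∈ F : F is injective}. Then (F', B) is a duality pair. -/
/-- A structure is injective if every tuple in one of its relations has pairwise
distinct entries. -/
def InjectiveStruct {σ : Type} {ar : σ → ℕ} {A : Type} (S : RelStruct σ ar A) : Prop :=
  ∀ (s : σ) (t : Fin (ar s) → A), t ∈ S.rel s → Function.Injective t

/-- `(F, B)` is a duality pair: a finite structure `A` has a homomorphism to `B`
iff no member of the class `F` of finite structures has a homomorphism to `A`. -/
def DualityPair {σ : Type} {ar : σ → ℕ}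
    (F : ∀ A : Type, Fintype A → RelStruct σ ar A → Prop)
    {B : Type} (SB : RelStruct σ ar B) : Prop :=
  ∀ (A : Type) (iA : Fintype A) (SA : RelStruct σ ar A),
    (∃ h, IsHom SA SB h) ↔
      ∀ (C : Type) (iC : Fintype C) (SC : RelStruct σ ar C),
        F C iC SC → ¬ ∃ h, IsHom SC SA h

theorem exists_embedding_eq_const_of_card_mul_lt {α β : Type*} [Fintype α] [Fintype β] {m : ℕ}
    (hm : Fintype.card β * m < Fintype.card α) (f : α → β) :
    ∃ (b : β) (e : Fin m ↪ α), ∀ j, f (e j) = b := by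
  classical
  obtain ⟨b, hb⟩ := Fintype.exists_lt_card_fiber_of_mul_lt_card f hm
  obtain ⟨e⟩ : Nonempty (Fin m ↪ {a // f a = b}) :=
    Function.Embedding.nonempty_of_card_le (by
      simpa only [Fintype.card_fin, Fintype.card_subtype] using hb.le)
  exact ⟨b, e.trans (Function.Embedding.subtype _), fun j => (e j).2⟩

section

variable {σ : Type} {ar : σ → ℕ} {A B C : Type}
  {SA : RelStruct σ ar A} {SB : RelStruct σ ar B} {SC : RelStruct σ ar C}

theorem IsHom.comp {g : B → C} {f : A → B} (hg : IsHom SB SC g) (hf : IsHom SA SB f) :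
    IsHom SA SC (g ∘ f) :=
  fun s t ht => hg s _ (hf s t ht)

theorem InjectiveStruct.of_isHom (hB : InjectiveStruct SB) {f : A → B} (hf : IsHom SA SB f) :
    InjectiveStruct SA :=
  fun s t ht => Function.Injective.of_comp (f := f) (hB s _ (hf s t ht))

namespace RelStruct

/-- The relations of `S` of arity at most `m`. The signature is kept, and the relations of larger
arity are made empty, so that homomorphisms from `S.restrictArity m` are the maps preserving the
relations of arity at most `m`. -/
def restrictArity (S : RelStruct σ ar A) (m : ℕ) : RelStruct σ ar A where
  rel s := {t | t ∈ S.rel s ∧ ar s ≤ m}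

theorem isHom_of_forall_restrictArity {f : A → B} (hf : ∀ m, IsHom (SA.restrictArity m) SB f) :
    IsHom SA SB f :=
  fun s t ht => hf (ar s) s t ⟨ht, le_rfl⟩

theorem exists_forall_isHom_of_restrictArity [Finite A] [Finite B]
    (SA : RelStruct σ ar A) (SB : RelStruct σ ar B) :
    ∃ m, ∀ f, IsHom (SA.restrictArity m) SB f → IsHom SA SB f := by
  have bound_of_map (f : A → B) : ∃ m, IsHom (SA.restrictArity m) SB f → IsHom SA SB f := by
    by_contra! hf
    exact (hf 0).2 (isHom_of_forall_restrictArity fun m => (hf m).1)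
  choose bound hbound using bound_of_map
  obtain ⟨m, hm⟩ := Finite.exists_le bound
  exact ⟨m, fun f hf => hbound f fun s t ht => hf s t ⟨ht.1, ht.2.trans (hm f)⟩⟩

/-- The blow-up of `S` by an index type `I`: every element is replaced by `I` copies, and the
relations consist of the injective tuples lying over tuples of `S`. -/
def blowup (S : RelStruct σ ar A) (I : Type) : RelStruct σ ar (A × I) where
  rel s := {t | Function.Injective t ∧ (fun i => (t i).1) ∈ S.rel s}

variable {I : Type}

theorem injectiveStruct_blowup : InjectiveStruct (SA.blowup I) :=
  fun _ _ ht => ht.1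

theorem isHom_fst_blowup : IsHom (SA.blowup I) SA Prod.fst :=
  fun _ _ ht => ht.2

/-- Lifting the `i`-th entry to its `i`-th copy makes equal entries distinct. -/
theorem mk_mem_blowup {s : σ} {t : Fin (ar s) → A} (ht : t ∈ SA.rel s)
    (e : A → Fin (ar s) ↪ I) : (fun i => (t i, e (t i) i)) ∈ (SA.blowup I).rel s := by
  refine ⟨fun i j hij => ?_, ht⟩
  obtain ⟨htij, heij⟩ := Prod.mk.inj hij
  rw [htij] at heij
  exact (e (t j)).injective heij

theorem isHom_restrictArity_of_isHom_blowup {m : ℕ} {h : A × I → B}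
    (hh : IsHom (SA.blowup I) SB h) {f : A → B} (e : A → Fin m ↪ I)
    (he : ∀ a j, h (a, e a j) = f a) : IsHom (SA.restrictArity m) SB f := by
  rintro s t ⟨ht, hs⟩
  have hlift := hh s _ (mk_mem_blowup ht fun a => (Fin.castLEEmb hs).trans (e a))
  simpa only [Function.Embedding.trans_apply, he] using hlift

end RelStruct

theorem exists_isHom_restrictArity_of_isHom_blowup {I : Type} [Fintype I] [Fintype B] {m : ℕ}
    (hI : Fintype.card B * m < Fintype.card I) {h : A × I → B}
    (hh : IsHom (SA.blowup I) SB h) : ∃ f, IsHom (SA.restrictArity m) SB f := by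
  choose f e he using fun a => exists_embedding_eq_const_of_card_mul_lt hI fun i => h (a, i)
  exact ⟨f, RelStruct.isHom_restrictArity_of_isHom_blowup hh e he⟩

theorem exists_blowup_isHom_imp_exists_isHom [Finite A] [Finite B]
    (SA : RelStruct σ ar A) (SB : RelStruct σ ar B) :
    ∃ N, (∃ h, IsHom (SA.blowup (Fin N)) SB h) → ∃ f, IsHom SA SB f := by
  have := Fintype.ofFinite B
  obtain ⟨m, hm⟩ := RelStruct.exists_forall_isHom_of_restrictArity SA SB
  refine ⟨Fintype.card B * m + 1, fun ⟨h, hh⟩ => ?_⟩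
  obtain ⟨f, hf⟩ := exists_isHom_restrictArity_of_isHom_blowup (m := m)
    (by simp only [Fintype.card_fin, Nat.lt_add_one]) hh
  exact ⟨f, hm f hf⟩

theorem dualityPair_restrict_injective_general [Finite B] (SB : RelStruct σ ar B)
    (F : ∀ A : Type, Fintype A → RelStruct σ ar A → Prop) (hF : DualityPair F SB) :
    DualityPair (fun C iC SC => F C iC SC ∧ InjectiveStruct SC) SB := by
  intro A iA SA
  refine ⟨fun hAB C iC SC hC => (hF A iA SA).1 hAB C iC SC hC.1, fun hno => ?_⟩
  obtain ⟨N, hN⟩ := exists_blowup_isHom_imp_exists_isHom SA SB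
  refine hN ((hF (A × Fin N) inferInstance (SA.blowup (Fin N))).2 ?_)
  rintro C iC SC hC ⟨h, hh⟩
  have hSC : InjectiveStruct SC := RelStruct.injectiveStruct_blowup.of_isHom hh
  exact hno C iC SC ⟨hC, hSC⟩ ⟨_, RelStruct.isHom_fst_blowup.comp hh⟩

end

/-- Theorem: if `(F, B)` is a duality pair, then so is `(F', B)`, where `F'` consists
of the injective members of `F`. -/
theorem dualityPair_restrict_injective {σ : Type} [Fintype σ] {ar : σ → ℕ}
    {B : Type} [Fintype B] (SB : RelStruct σ ar B)
    (F : ∀ A : Type, Fintype A → RelStruct σ ar A → Prop)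
    (hF : DualityPair F SB) :
    DualityPair (fun C iC SC => F C iC SC ∧ InjectiveStruct SC) SB :=
  dualityPair_restrict_injective_general SB F hF
end

section
/- Let n ≥ 1 and let G = (V, E) be a finite directed graph. Then there exists a homomorphism from G to the transitive tournament T_n = ({1,…,n}, <) if and only if there is no sequence a_0, a_1, …, a_n of vertices of G (not necessarily distinct) with (a_{i-1}, a_i) ∈ E for all 1 ≤ i ≤ n; equivalently, if and only if there is no homomorphism from the directed path P_{n+1} to G. In other words, ({P_{n+1}}, T_n) is a duality pair. -/
/-!
A homomorphism to `T_n` strictly increases along the edges, so composing it with one from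
`P_{n+1}` would give a strictly increasing map from `n + 1` elements to `n`. Conversely, if no walk
has length `n`, send each vertex to the length of a longest walk ending there: appending an edge
`u → v` to a longest walk ending at `u` shows that the value at `v` is larger.
-/

/-- `h` is a homomorphism of directed graphs from `(V, E)` to `(W, F)`. -/
def DigraphHom {V W : Type} (E : V → V → Prop) (F : W → W → Prop) (h : V → W) : Prop :=
  ∀ a b, E a b → F (h a) (h b)

/-- The edge relation of the directed path `P_n` with `n` vertices `0, …, n-1` and
edges `i → i+1`. -/
def pathD (n : ℕ) : Fin n → Fin n → Prop := fun a b => (b : ℕ) = (a : ℕ) + 1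

theorem DigraphHom.comp {U V W : Type} {D : U → U → Prop} {E : V → V → Prop} {F : W → W → Prop}
    {g : V → W} {h : U → V} (hg : DigraphHom E F g) (hh : DigraphHom D E h) :
    DigraphHom D F (g ∘ h) :=
  fun a b hab => hg _ _ (hh a b hab)

theorem digraphHom_pathD_succ_iff {V : Type} {E : V → V → Prop} {k : ℕ} {a : Fin (k + 1) → V} :
    DigraphHom (pathD (k + 1)) E a ↔ ∀ i : Fin k, E (a i.castSucc) (a i.succ) := by
  refine ⟨fun ha i => ha _ _ rfl, fun ha x y hxy => ?_⟩
  have hy : (y : ℕ) = x + 1 := hxy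
  have hx : (x : ℕ) < k := by omega
  obtain rfl : y = Fin.succ ⟨x, hx⟩ := Fin.ext hy
  exact ha ⟨x, hx⟩

theorem digraphHom_pathD_succ_lt_iff_strictMono {α : Type} [Preorder α] {k : ℕ}
    {a : Fin (k + 1) → α} : DigraphHom (pathD (k + 1)) (· < ·) a ↔ StrictMono a :=
  digraphHom_pathD_succ_iff.trans Fin.strictMono_iff_lt_succ.symm

theorem not_digraphHom_pathD_succ_lt {n : ℕ} (a : Fin (n + 1) → Fin n) :
    ¬ DigraphHom (pathD (n + 1)) (· < ·) a := fun ha =>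
  have hinj : Function.Injective a := (digraphHom_pathD_succ_lt_iff_strictMono.mp ha).injective
  n.not_succ_le_self (Fin.le_of_injective a hinj)

section EndsWalk

variable {V : Type} {E : V → V → Prop} {u v : V} {k n : ℕ}

/-- Some walk of length `k` in the digraph `E` ends at `v`. Walks of length `k` are encoded as
homomorphisms from the path `P_{k+1}`. -/
def EndsWalk (E : V → V → Prop) (v : V) (k : ℕ) : Prop :=
  ∃ a : Fin (k + 1) → V, DigraphHom (pathD (k + 1)) E a ∧ a (Fin.last k) = v

theorem EndsWalk.zero (E : V → V → Prop) (v : V) : EndsWalk E v 0 :=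
  ⟨fun _ => v, digraphHom_pathD_succ_iff.mpr Fin.elim0, rfl⟩

theorem EndsWalk.succ (hu : EndsWalk E u k) (huv : E u v) : EndsWalk E v (k + 1) := by
  obtain ⟨a, ha, rfl⟩ := hu
  refine ⟨Fin.snoc a v, digraphHom_pathD_succ_iff.mpr fun i => ?_, Fin.snoc_last _ _⟩
  cases i using Fin.lastCases with
  | last => simpa only [Fin.snoc_castSucc, Fin.succ_last, Fin.snoc_last] using huv
  | cast i =>
    simpa only [Fin.snoc_castSucc, Fin.succ_castSucc] using digraphHom_pathD_succ_iff.mp ha i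

open Classical in
/-- The largest length, among those at most `n`, of a walk in the digraph `E` ending at `v`. The
cutoff `n` makes this meaningful also when arbitrarily long walks end at `v`. -/
noncomputable def walkLevel (E : V → V → Prop) (n : ℕ) (v : V) : ℕ :=
  Nat.findGreatest (EndsWalk E v) n

theorem endsWalk_walkLevel (E : V → V → Prop) (n : ℕ) (v : V) : EndsWalk E v (walkLevel E n v) := by
  classical exact Nat.findGreatest_spec n.zero_le (EndsWalk.zero E v)

theorem walkLevel_lt (hv : ¬ EndsWalk E v n) : walkLevel E n v < n := by
  classical
  have hne : walkLevel E n v ≠ n := fun h => hv (h ▸ endsWalk_walkLevel E n v)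
  exact (Nat.findGreatest_le n).lt_of_ne hne

theorem walkLevel_lt_walkLevel (huv : E u v) (hu : walkLevel E n u < n) :
    walkLevel E n u < walkLevel E n v := by
  classical exact Nat.le_findGreatest hu ((endsWalk_walkLevel E n u).succ huv)

end EndsWalk

theorem exists_digraphHom_lt_iff_not_exists_digraphHom_pathD {V : Type} {E : V → V → Prop}
    {n : ℕ} :
    (∃ h : V → Fin n, DigraphHom E (· < ·) h) ↔
      ¬ ∃ g : Fin (n + 1) → V, DigraphHom (pathD (n + 1)) E g := by
  constructor
  · rintro ⟨h, hh⟩ ⟨g, hg⟩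
    exact not_digraphHom_pathD_succ_lt (h ∘ g) (hh.comp hg)
  · intro hpath
    have hlevel (v : V) : walkLevel E n v < n :=
      walkLevel_lt fun ⟨g, hg, _⟩ => hpath ⟨g, hg⟩
    exact ⟨fun v => ⟨walkLevel E n v, hlevel v⟩,
      fun u _ huv => walkLevel_lt_walkLevel huv (hlevel u)⟩

theorem transitive_tournament_duality_general (n : ℕ) (V : Type) (E : V → V → Prop) :
    ((∃ h : V → Fin n, DigraphHom E (· < ·) h) ↔
      ¬ ∃ a : Fin (n + 1) → V, ∀ i : Fin n, E (a i.castSucc) (a i.succ)) ∧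
    ((∃ h : V → Fin n, DigraphHom E (· < ·) h) ↔
      ¬ ∃ g : Fin (n + 1) → V, DigraphHom (pathD (n + 1)) E g) := by
  have duality := exists_digraphHom_lt_iff_not_exists_digraphHom_pathD (E := E) (n := n)
  exact ⟨by simpa only [digraphHom_pathD_succ_iff] using duality, duality⟩

/-- Theorem: a finite digraph `G` has a homomorphism to the transitive tournament
`T_n = (Fin n, <)` iff there is no directed walk `a₀ → a₁ → ⋯ → aₙ` of length `n` in
`G`, iff there is no homomorphism from the directed path `P_{n+1}` to `G`; i.e.,
`({P_{n+1}}, T_n)` is a duality pair. -/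
theorem transitive_tournament_duality (n : ℕ) (hn : 1 ≤ n)
    (V : Type) [Fintype V] (E : V → V → Prop) :
    ((∃ h : V → Fin n, DigraphHom E (· < ·) h) ↔
      ¬ ∃ a : Fin (n + 1) → V, ∀ i : Fin n, E (a i.castSucc) (a i.succ)) ∧
    ((∃ h : V → Fin n, DigraphHom E (· < ·) h) ↔
      ¬ ∃ g : Fin (n + 1) → V, DigraphHom (pathD (n + 1)) E g) :=
  transitive_tournament_duality_general n V E
end

section
/- Let n ≥ 2 and let B_n be the structure with domain {0,1}, unary relation O^{B_n} = {0} and n-ary relation R^{B_n} = {0,1}^n \ {(0,…,0)}. Then B_n has no quasi Maltsev polymorphism; moreover, if n ≥ 3, then B_n also has no quasi majority polymorphism. -/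
/-- a quasi majority operation: `m x x y = m x y x = m y x x = m x x x`. -/
def IsQuasiMajority {B : Type} (m : B → B → B → B) : Prop :=
  ∀ x y, m x x y = m x y x ∧ m x y x = m y x x ∧ m y x x = m x x x

/-- a ternary operation on `{0,1}` is a polymorphism of the structure `B_n` with
`O = {0}` and `R = {0,1}ⁿ \ {(0,…,0)}`. -/
def PreservesBn (n : ℕ) (m : Fin 2 → Fin 2 → Fin 2 → Fin 2) : Prop :=
  m 0 0 0 = 0 ∧
  ∀ t₁ t₂ t₃ : Fin n → Fin 2,
    (¬ ∀ i, t₁ i = 0) → (¬ ∀ i, t₂ i = 0) → (¬ ∀ i, t₃ i = 0) →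
    ¬ ∀ i, m (t₁ i) (t₂ i) (t₃ i) = 0

open Cardinal

/-- `m` is a ternary polymorphism of the structure with domain `B`, unary relation `{0}` and
`ι`-ary relation `(ι → B) \ {0}`; the structure `B_n` is the case `B = Fin 2`, `ι = Fin n`. -/
structure PreservesZeroAndNonzero (ι : Type*) {B : Type} [Zero B] (m : B → B → B → B) :
    Prop where
  apply_zero : m 0 0 0 = 0
  apply_ne_zero : ∀ {t₁ t₂ t₃ : ι → B}, t₁ ≠ 0 → t₂ ≠ 0 → t₃ ≠ 0 →
    (fun i => m (t₁ i) (t₂ i) (t₃ i)) ≠ 0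

theorem preservesBn_iff_preservesZeroAndNonzero {n : ℕ} {m : Fin 2 → Fin 2 → Fin 2 → Fin 2} :
    PreservesBn n m ↔ PreservesZeroAndNonzero (Fin n) m := by
  have tuple_ne_zero_iff (t : Fin n → Fin 2) : (¬ ∀ i, t i = 0) ↔ t ≠ 0 := funext_iff.not.symm
  simp only [PreservesBn, tuple_ne_zero_iff]
  exact ⟨fun ⟨h₀, h⟩ => ⟨h₀, h _ _ _⟩, fun h => ⟨h.apply_zero, fun _ _ _ => h.apply_ne_zero⟩⟩

section

variable {B : Type} {m : B → B → B → B}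

theorem IsQuasiMaltsev.apply_self_left (hm : IsQuasiMaltsev m) (x y : B) :
    m x x y = m y y y :=
  (hm x y).1.trans (hm x y).2

theorem IsQuasiMaltsev.apply_self_right (hm : IsQuasiMaltsev m) (x y : B) :
    m y x x = m y y y :=
  (hm x y).2

theorem IsQuasiMajority.apply_minority_first (hm : IsQuasiMajority m) (x y : B) :
    m y x x = m x x x :=
  (hm x y).2.2

theorem IsQuasiMajority.apply_minority_second (hm : IsQuasiMajority m) (x y : B) :
    m x y x = m x x x :=
  (hm x y).2.1.trans (hm.apply_minority_first x y)

theorem IsQuasiMajority.apply_minority_third (hm : IsQuasiMajority m) (x y : B) :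
    m x x y = m x x x :=
  (hm x y).1.trans (hm.apply_minority_second x y)

variable {ι : Type*} [Zero B] [Nontrivial B]

theorem PreservesZeroAndNonzero.not_isQuasiMaltsev [Nontrivial ι]
    (h : PreservesZeroAndNonzero ι m) : ¬ IsQuasiMaltsev m := by
  classical
  intro hm
  obtain ⟨a, ha⟩ := exists_ne (0 : B)
  obtain ⟨i, j, hij⟩ := exists_pair_ne ι
  have single_ne : Pi.single i a ≠ (0 : ι → B) := Pi.single_ne_zero_iff.mpr ha
  have const_ne : Function.const ι a ≠ 0 := Function.const_ne_zero.mpr ha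
  have update_ne : Function.update (Function.const ι a) i 0 ≠ 0 :=
    Function.ne_iff.mpr ⟨j, by simpa [hij.symm] using ha⟩
  refine h.apply_ne_zero single_ne const_ne update_ne (funext fun l => ?_)
  obtain rfl | hl := eq_or_ne l i
  · simp [hm.apply_self_left a 0, h.apply_zero]
  · simp [hl, hm.apply_self_right a 0, h.apply_zero]

theorem PreservesZeroAndNonzero.not_isQuasiMajority (hι : 3 ≤ #ι)
    (h : PreservesZeroAndNonzero ι m) : ¬ IsQuasiMajority m := by
  classical
  intro hm
  obtain ⟨a, ha⟩ := exists_ne (0 : B)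
  have single_ne (l : ι) : Pi.single l a ≠ (0 : ι → B) := Pi.single_ne_zero_iff.mpr ha
  have : Nontrivial ι := one_lt_iff_nontrivial.mp (lt_of_lt_of_le (by norm_num) hι)
  obtain ⟨i, j, hij⟩ := exists_pair_ne ι
  obtain ⟨k, hki, hkj⟩ := exists_ne_ne_of_three_le hι i j
  refine h.apply_ne_zero (single_ne i) (single_ne j) (single_ne k) (funext fun l => ?_)
  obtain rfl | hli := eq_or_ne l i
  · simp [hij, hki.symm, hm.apply_minority_first 0 a, h.apply_zero]
  obtain rfl | hlj := eq_or_ne l j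
  · simp [hli, hkj.symm, hm.apply_minority_second 0 a, h.apply_zero]
  · simp [hli, hlj, hm.apply_minority_third 0, h.apply_zero]

end

theorem bn_no_quasiMaltsev_no_quasiMajority_general (ι : Type*) (B : Type) [Nontrivial ι]
    [Zero B] [Nontrivial B] :
    (¬ ∃ m : B → B → B → B, PreservesZeroAndNonzero ι m ∧ IsQuasiMaltsev m) ∧
    (3 ≤ #ι → ¬ ∃ m : B → B → B → B, PreservesZeroAndNonzero ι m ∧ IsQuasiMajority m) :=
  ⟨fun ⟨_, h, hm⟩ => h.not_isQuasiMaltsev hm,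
    fun hι ⟨_, h, hm⟩ => h.not_isQuasiMajority hι hm⟩

/-- Theorem: for `n ≥ 2` the structure `B_n` has no quasi Maltsev polymorphism, and
for `n ≥ 3` it also has no quasi majority polymorphism. -/
theorem bn_no_quasiMaltsev_no_quasiMajority (n : ℕ) (hn : 2 ≤ n) :
    (¬ ∃ m, PreservesBn n m ∧ IsQuasiMaltsev m) ∧
    (3 ≤ n → ¬ ∃ m, PreservesBn n m ∧ IsQuasiMajority m) := by
  have : Nontrivial (Fin n) := Fin.nontrivial_iff_two_le.mpr hn
  simpa [preservesBn_iff_preservesZeroAndNonzero] using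
    bn_no_quasiMaltsev_no_quasiMajority_general (Fin n) (Fin 2)
end

section
/- Let B be a finite nonempty structure in a finite relational signature whose relations all have arity at most m, where m ≥ 1. Set k₀ := m·|B| and n₀ := m·C(|B|, ⌊|B|/2⌋) (a binomial coefficient). Then B has a k-absorptive polymorphism of arity nk for all n,k ≥ 1 if and only if B has a k₀-absorptive polymorphism of arity n₀k₀. -/
section MinimalRepresentatives

variable {ι α : Type*} [PartialOrder α]

lemma exists_bijOn_minimal_upperClosure (F : ι → α) :
    ∃ K : Set ι, Set.BijOn F K {a | Minimal (· ∈ upperClosure (Set.range F)) a} := by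
  have hsurj : Set.SurjOn F Set.univ {a | Minimal (· ∈ upperClosure (Set.range F)) a} := by
    intro a ha
    obtain ⟨_, ⟨i, rfl⟩, hia⟩ := mem_upperClosure.1 ha.prop
    exact ⟨i, trivial, ha.eq_of_le (subset_upperClosure ⟨i, rfl⟩) hia⟩
  obtain ⟨K, -, hK⟩ := hsurj.exists_bijOn_subset
  exact ⟨K, hK⟩

lemma exists_le_of_surjOn_minimal_upperClosure [WellFoundedLT α] {F : ι → α} {K : Set ι}
    (hK : Set.SurjOn F K {a | Minimal (· ∈ upperClosure (Set.range F)) a}) (i : ι) :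
    ∃ j ∈ K, F j ≤ F i := by
  obtain ⟨a, hai, ha⟩ := exists_minimal_le_of_wellFoundedLT
    (· ∈ upperClosure (Set.range F)) (F i) (subset_upperClosure ⟨i, rfl⟩)
  obtain ⟨j, hj, rfl⟩ := hK ha
  exact ⟨j, hj, hai⟩

lemma upperClosure_range_comp_eq [WellFoundedLT α] {ι' : Type*} {F : ι → α} {K : Set ι}
    (hK : Set.SurjOn F K {a | Minimal (· ∈ upperClosure (Set.range F)) a})
    {a : ι' → ι} (ha : K ⊆ Set.range a) :
    upperClosure (Set.range (F ∘ a)) = upperClosure (Set.range F) := by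
  refine le_antisymm ?_ (upperClosure_anti (Set.range_comp_subset_range a F))
  rintro b ⟨_, ⟨i, rfl⟩, hib⟩
  obtain ⟨j, hjK, hji⟩ := exists_le_of_surjOn_minimal_upperClosure hK i
  obtain ⟨l, rfl⟩ := ha hjK
  exact ⟨F (a l), ⟨l, rfl⟩, hji.trans hib⟩

end MinimalRepresentatives

section Cardinality

lemma encard_le_choose_of_isAntichain {α : Type*} [Fintype α] {𝒜 : Set (Set α)}
    (h𝒜 : IsAntichain (· ≤ ·) 𝒜) :
    𝒜.encard ≤ (Fintype.card α).choose (Fintype.card α / 2) := by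
  classical
  let ℱ : Set (Finset α) := Fintype.finsetOrderIsoSet.symm '' 𝒜
  have hℱ : IsAntichain (· ⊆ ·) (ℱ.toFinset : Set (Finset α)) := by
    rw [Set.coe_toFinset]
    exact h𝒜.image_iso Fintype.finsetOrderIsoSet.symm
  calc 𝒜.encard = ℱ.encard :=
        (Fintype.finsetOrderIsoSet.symm.injective.injOn.encard_image).symm
    _ = (ℱ.toFinset.card : ℕ∞) := by rw [← Set.encard_coe_eq_coe_finsetCard, Set.coe_toFinset]
    _ ≤ (Fintype.card α).choose (Fintype.card α / 2) := mod_cast hℱ.sperner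

lemma exists_range_superset_of_encard_le {α : Type*} [Nonempty α] {s : Set α} {n : ℕ}
    (hs : s.encard ≤ n) : ∃ a : Fin n → α, s ⊆ Set.range a := by
  have hfin : s.Finite := Set.finite_of_encard_le_coe hs
  have := hfin.fintype
  have hcard : Fintype.card s ≤ Fintype.card (Fin n) := by
    rw [Fintype.card_fin, ← Nat.card_eq_fintype_card, Nat.card_coe_set_eq]
    exact (Set.encard_le_coe_iff_finite_ncard_le.1 hs).2
  obtain ⟨e⟩ := Function.Embedding.nonempty_of_card_le hcard
  exact ⟨Function.extend e Subtype.val fun _ => Classical.arbitrary α,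
    fun x hx => ⟨e ⟨x, hx⟩, e.injective.extend_apply _ _ _⟩⟩

lemma exists_range_superset_of_forall_encard_le {P α : Type*} [Fintype P] [Nonempty α]
    {s : P → Set α} {c n : ℕ} (hs : ∀ p, (s p).encard ≤ c) (hn : Fintype.card P * c ≤ n) :
    ∃ a : Fin n → α, ∀ p, s p ⊆ Set.range a := by
  have hunion : (⋃ p, s p).encard ≤ n :=
    calc (⋃ p, s p).encard ≤ ∑ p, (s p).encard := Set.encard_iUnion_le_of_fintype s
      _ ≤ ∑ _p : P, (c : ℕ∞) := Finset.sum_le_sum fun p _ => hs p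
      _ = (Fintype.card P * c : ℕ) := by simp
      _ ≤ n := mod_cast hn
  obtain ⟨a, ha⟩ := exists_range_superset_of_encard_le hunion
  exact ⟨a, fun p => (Set.subset_iUnion s p).trans ha⟩

lemma exists_perm_of_bijOn {α β : Type*} [Finite α] {F G : α → β} {s t : Set α} {M : Set β}
    (hF : Set.BijOn F s M) (hG : Set.BijOn G t M) :
    ∃ e : Equiv.Perm α, (∀ a, e a ∈ t ↔ a ∈ s) ∧ ∀ a ∈ s, G (e a) = F a := by
  classical
  let e₀ : {a // a ∈ s} ≃ {a // a ∈ t} := (hF.equiv F).trans (hG.equiv G).symm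
  have he₀ (a : {a // a ∈ s}) : G (e₀ a) = F a :=
    congrArg Subtype.val ((hG.equiv G).apply_symm_apply (hF.equiv F a))
  refine ⟨e₀.extendSubtype, fun a => ⟨?_, e₀.extendSubtype_mem a⟩, fun a ha => ?_⟩
  · contrapose
    exact e₀.extendSubtype_not_mem a
  · rw [e₀.extendSubtype_apply_of_mem a ha, he₀]

end Cardinality

/-- The up-set of `Set B` generated by the sets of entries of the blocks of `x`. Blocks are
compared through this invariant, which does not refer to their number and length. -/
def blockUpperClosure {ι κ B : Type*} (x : ι → κ → B) : UpperSet (Set B) :=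
  upperClosure (Set.range fun i => Set.range (x i))

section Submatrix

variable {P ι κ B : Type*} [Fintype P] [Fintype B]

lemma exists_entries_range_eq [Nonempty κ] {k : ℕ} (hk : Fintype.card P * Fintype.card B ≤ k)
    (v : P → κ → B) : ∃ b : Fin k → κ, ∀ p, Set.range (v p ∘ b) = Set.range (v p) := by
  have hrep (p : P) : ∃ s : Set κ, Set.BijOn (v p) s (Set.range (v p)) := by
    obtain ⟨s, -, hs⟩ := (Set.surjOn_image (v p) Set.univ).exists_bijOn_subset
    exact ⟨s, by rwa [Set.image_univ] at hs⟩
  choose s hs using hrep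
  have hcard (p : P) : (s p).encard ≤ Fintype.card B :=
    calc (s p).encard ≤ (Set.univ : Set B).encard :=
          Set.encard_le_encard_of_injOn (Set.mapsTo_univ _ _) (hs p).injOn
      _ = Fintype.card B := by simp
  obtain ⟨b, hb⟩ := exists_range_superset_of_forall_encard_le hcard hk
  refine ⟨b, fun p => (Set.range_comp_subset_range b (v p)).antisymm ?_⟩
  rw [Set.range_comp]
  exact (hs p).surjOn.trans (Set.image_mono (hb p))

lemma exists_rows_upperClosure_eq [Nonempty ι] {n : ℕ}
    (hn : Fintype.card P * (Fintype.card B).choose (Fintype.card B / 2) ≤ n)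
    (F : P → ι → Set B) :
    ∃ a : Fin n → ι, ∀ p,
      upperClosure (Set.range (F p ∘ a)) = upperClosure (Set.range (F p)) := by
  choose K hK using fun p => exists_bijOn_minimal_upperClosure (F p)
  have hcard (p : P) : (K p).encard ≤ (Fintype.card B).choose (Fintype.card B / 2) :=
    (Set.encard_le_encard_of_injOn (hK p).mapsTo (hK p).injOn).trans
      (encard_le_choose_of_isAntichain (setOfPred_minimal_antichain _))
  obtain ⟨a, ha⟩ := exists_range_superset_of_forall_encard_le hcard hn
  exact ⟨a, fun p => upperClosure_range_comp_eq (hK p).surjOn (ha p)⟩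

lemma exists_submatrix_blockUpperClosure_eq [Nonempty ι] [Nonempty κ] {n k : ℕ}
    (hn : Fintype.card P * (Fintype.card B).choose (Fintype.card B / 2) ≤ n)
    (hk : Fintype.card P * Fintype.card B ≤ k) (x : P → ι → κ → B) :
    ∃ (a : Fin n → ι) (b : Fin n → Fin k → κ), ∀ p,
      blockUpperClosure (fun i j => x p (a i) (b i j)) = blockUpperClosure (x p) := by
  obtain ⟨a, ha⟩ := exists_rows_upperClosure_eq hn fun p i => Set.range (x p i)
  choose b hb using fun i => exists_entries_range_eq hk fun p => x p (a i)
  refine ⟨a, b, fun p => ?_⟩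
  calc blockUpperClosure (fun i j => x p (a i) (b i j))
      = upperClosure (Set.range fun i => Set.range (x p (a i))) :=
        congrArg (fun F => upperClosure (Set.range F)) (funext fun i => hb i p)
    _ = blockUpperClosure (x p) := ha p

end Submatrix

section Absorptive

variable {B : Type} {n k : ℕ} {f : (Fin n → Fin k → B) → B} {x y : Fin n → Fin k → B}

lemma blockUpperClosure_update_eq {i j : Fin n} (hij : i ≠ j)
    (h : Set.range (x j) ⊆ Set.range (x i)) :
    blockUpperClosure (Function.update x i (x j)) = blockUpperClosure x := by
  apply le_antisymm
  · rintro A ⟨_, ⟨l, rfl⟩, hl⟩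
    obtain rfl | hli := eq_or_ne l i
    · exact ⟨_, ⟨l, rfl⟩, by simpa using h.trans hl⟩
    · exact ⟨_, ⟨l, rfl⟩, by simpa [hli] using hl⟩
  · rintro A ⟨_, ⟨l, rfl⟩, hl⟩
    obtain rfl | hli := eq_or_ne l i
    · exact ⟨_, ⟨j, rfl⟩, by simpa using hl⟩
    · exact ⟨_, ⟨l, rfl⟩, by simpa [hli] using hl⟩

lemma isAbsorptive_comp_blockUpperClosure (g : UpperSet (Set B) → B) :
    IsAbsorptive n k (g ∘ blockUpperClosure) := by
  refine ⟨fun x y hxy => congrArg g ?_,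
    fun x i j hij h => congrArg g (blockUpperClosure_update_eq hij h).symm⟩
  have hrange : (Set.range fun i => Set.range (x i)) = Set.range fun i => Set.range (y i) := by
    ext A
    simpa using congrArg (A ∈ ·) hxy
  exact congrArg upperClosure hrange

lemma BlockSym.eq_of_perm (hf : BlockSym n k f) (e : Equiv.Perm (Fin n))
    (h : ∀ i, Set.range (y (e i)) = Set.range (x i)) : f x = f y := by
  apply hf
  conv_rhs => rw [← Multiset.map_univ_val_equiv e, Multiset.map_map]
  exact Multiset.map_congr rfl fun i _ => (h i).symm

namespace IsAbsorptive

lemma update_eq (hf : IsAbsorptive n k f) {i j : Fin n} (hij : i ≠ j) {v : Fin k → B}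
    (hx : Set.range (x j) ⊆ Set.range (x i)) (hv : Set.range (x j) ⊆ Set.range v) :
    f (Function.update x i v) = f x := by
  have hj : Function.update x i v j = x j := Function.update_of_ne hij.symm _ _
  calc f (Function.update x i v)
      = f (Function.update (Function.update x i v) i (Function.update x i v j)) :=
        hf.2 _ i j hij (by simpa [hj] using hv)
    _ = f (Function.update x i (x j)) := by rw [hj, Function.update_idem]
    _ = f x := (hf.2 x i j hij hx).symm

lemma piecewise_eq (hf : IsAbsorptive n k f) {u : Fin k → B} (hu : Function.Surjective u)
    (T : Finset (Fin n)) (hT : ∀ i ∈ T, ∃ j ∉ T, Set.range (x j) ⊆ Set.range (x i)) :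
    f (T.piecewise (fun _ => u) x) = f x := by
  induction T using Finset.induction_on with
  | empty => rw [Finset.piecewise_empty]
  | insert i T hiT ih =>
    have hT' : ∀ l ∈ T, ∃ j ∉ T, Set.range (x j) ⊆ Set.range (x l) := fun l hl =>
      let ⟨j, hj, hjl⟩ := hT l (Finset.mem_insert_of_mem hl)
      ⟨j, fun h => hj (Finset.mem_insert_of_mem h), hjl⟩
    obtain ⟨j, hj, hji⟩ := hT i (Finset.mem_insert_self i T)
    obtain ⟨hne, hjT⟩ : j ≠ i ∧ j ∉ T := by simpa using hj
    rw [Finset.piecewise_insert, hf.update_eq hne.symm, ih hT']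
    · simpa [hiT, hjT] using hji
    · simp [hu.range_eq]

lemma factorsThrough_blockUpperClosure (hf : IsAbsorptive n k f) {u : Fin k → B}
    (hu : Function.Surjective u) : Function.FactorsThrough f blockUpperClosure := by
  classical
  have := Finite.of_surjective u hu
  intro x y hxy
  obtain ⟨K, hK⟩ := exists_bijOn_minimal_upperClosure fun i => Set.range (x i)
  obtain ⟨L, hL⟩ := exists_bijOn_minimal_upperClosure fun i => Set.range (y i)
  have hx : f ((Kᶜ).toFinset.piecewise (fun _ => u) x) = f x := hf.piecewise_eq hu _ fun i _ => by
    simpa using exists_le_of_surjOn_minimal_upperClosure hK.surjOn i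
  have hy : f ((Lᶜ).toFinset.piecewise (fun _ => u) y) = f y := hf.piecewise_eq hu _ fun i _ => by
    simpa using exists_le_of_surjOn_minimal_upperClosure hL.surjOn i
  unfold blockUpperClosure at hxy
  rw [← hxy] at hL
  obtain ⟨e, heL, he⟩ := exists_perm_of_bijOn hK hL
  rw [← hx, ← hy]
  refine hf.1.eq_of_perm e fun i => ?_
  by_cases hi : i ∈ K
  · simpa [hi, heL] using he i hi
  · simp [hi, heL]

end IsAbsorptive

end Absorptive

lemma isBlockPoly_comp_blockUpperClosure {σ : Type} {ar : σ → ℕ} {B : Type} [Fintype B]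
    {S : RelStruct σ ar B} {m n₀ k₀ : ℕ} (har : ∀ s, ar s ≤ m)
    (hn₀ : m * (Fintype.card B).choose (Fintype.card B / 2) ≤ n₀)
    (hk₀ : m * Fintype.card B ≤ k₀) {g : UpperSet (Set B) → B}
    (hg : IsBlockPoly S n₀ k₀ (g ∘ blockUpperClosure)) (n k : ℕ) [NeZero n] [NeZero k] :
    IsBlockPoly S n k (g ∘ blockUpperClosure) := by
  intro s t ht
  have hs (c : ℕ) : Fintype.card (Fin (ar s)) * c ≤ m * c := by
    simpa using Nat.mul_le_mul_right c (har s)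
  obtain ⟨a, b, hab⟩ := exists_submatrix_blockUpperClosure_eq ((hs _).trans hn₀)
    ((hs _).trans hk₀) fun (p : Fin (ar s)) (i : Fin n) (j : Fin k) => t (i, j) p
  have hsub := hg s (fun q => t (a q.1, b q.1 q.2)) fun _ => ht _
  simpa only [Function.comp_apply, hab] using hsub

theorem absorptive_iff_absorptive_bounded_general
    {σ : Type} {ar : σ → ℕ} {B : Type} [Fintype B] [Nonempty B]
    (S : RelStruct σ ar B) {m n₀ k₀ : ℕ} (hm : 1 ≤ m) (har : ∀ s, ar s ≤ m)
    (hn₀ : m * (Fintype.card B).choose (Fintype.card B / 2) ≤ n₀)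
    (hk₀ : m * Fintype.card B ≤ k₀) :
    (∀ n k : ℕ, 1 ≤ n → 1 ≤ k →
        ∃ f : (Fin n → Fin k → B) → B, IsAbsorptive n k f ∧ IsBlockPoly S n k f) ↔
    ∃ f : (Fin n₀ → Fin k₀ → B) → B, IsAbsorptive n₀ k₀ f ∧ IsBlockPoly S n₀ k₀ f := by
  constructor
  · intro h
    exact h n₀ k₀
      ((Nat.mul_pos hm (Nat.choose_pos (Nat.div_le_self _ _))).trans_le hn₀)
      ((Nat.mul_pos hm Fintype.card_pos).trans_le hk₀)
  · rintro ⟨f, hf, hpoly⟩ n k hn hk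
    have : NeZero n := .of_pos hn
    have : NeZero k := .of_pos hk
    have hcard : (Set.univ : Set B).encard ≤ k₀ := by
      simpa using (Nat.le_mul_of_pos_left _ hm).trans hk₀
    obtain ⟨u, huniv⟩ := exists_range_superset_of_encard_le hcard
    have hu : Function.Surjective u := fun b => huniv (Set.mem_univ b)
    obtain ⟨g, rfl⟩ := (Function.factorsThrough_iff f).1 (hf.factorsThrough_blockUpperClosure hu)
    exact ⟨g ∘ blockUpperClosure, isAbsorptive_comp_blockUpperClosure g,
      isBlockPoly_comp_blockUpperClosure har hn₀ hk₀ hpoly n k⟩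

/-- Theorem: let `B` be a finite nonempty structure in a finite relational signature
whose relations all have arity at most `m`, `m ≥ 1`. With `k₀ := m * |B|` and
`n₀ := m * C(|B|, ⌊|B|/2⌋)`, the structure `B` has `k`-absorptive polymorphisms of
arity `n * k` for all `n, k ≥ 1` iff it has a `k₀`-absorptive polymorphism of arity
`n₀ * k₀`. -/
theorem absorptive_iff_absorptive_bounded
    {σ : Type} [Fintype σ] {ar : σ → ℕ} {B : Type} [Fintype B] [Nonempty B]
    (S : RelStruct σ ar B) (m : ℕ) (hm : 1 ≤ m) (har : ∀ s, ar s ≤ m) :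
    (∀ n k : ℕ, 1 ≤ n → 1 ≤ k →
        ∃ f : (Fin n → Fin k → B) → B, IsAbsorptive n k f ∧ IsBlockPoly S n k f) ↔
    ∃ f : (Fin (m * (Fintype.card B).choose (Fintype.card B / 2)) →
            Fin (m * Fintype.card B) → B) → B,
      IsAbsorptive (m * (Fintype.card B).choose (Fintype.card B / 2))
        (m * Fintype.card B) f ∧
      IsBlockPoly S (m * (Fintype.card B).choose (Fintype.card B / 2))
        (m * Fintype.card B) f :=
  absorptive_iff_absorptive_bounded_general S hm har le_rfl le_rfl
end

section
/- Let B be a set, let R ⊆ B × B be a binary relation, and let m : B^3 → B be a quasi Maltsev operation that preserves R, i.e. (a,a'), (b,b'), (c,c') ∈ R imply (m(a,b,c), m(a',b',c')) ∈ R. Define e(x) := m(x,x,x). Then for all a, b, x, y ∈ B, if (a,x) ∈ R, (b,x) ∈ R and (b,y) ∈ R, then (e(a), e(y)) ∈ R. In particular, whenever (a,b) ∈ R ∘ R⁻¹ ∘ R, also (e(a), e(b)) ∈ R. -/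
open scoped Relator

theorem quasiMaltsev_zigzag_general {α β γ δ : Type*} {R : α → β → Prop} {S : γ → δ → Prop}
    {m : α → α → α → γ} {n : β → β → β → δ}
    (hm : ∀ a b, m a b b = m a a a) (hn : ∀ x y, n x x y = n y y y)
    (hmn : (R ⇒ R ⇒ R ⇒ S) m n) {a b : α} {x y : β}
    (hax : R a x) (hbx : R b x) (hby : R b y) : S (m a a a) (n y y y) := by
  have h : S (m a b b) (n x x y) := hmn hax hbx hby
  rwa [hm, hn] at h

/-- Theorem: let `R` be a binary relation on `B` preserved by a quasi Maltsev
operation `m`, and let `e x := m x x x`. If `(a,x) ∈ R`, `(b,x) ∈ R` and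
`(b,y) ∈ R`, then `(e a, e y) ∈ R`; in particular, `(a,b) ∈ R ∘ R⁻¹ ∘ R` implies
`(e a, e b) ∈ R`. -/
theorem quasiMaltsev_zigzag (B : Type) (R : B → B → Prop) (m : B → B → B → B)
    (hqm : ∀ x y, m x x y = m y x x ∧ m y x x = m y y y)
    (hpres : ∀ a a' b b' c c',
      R a a' → R b b' → R c c' → R (m a b c) (m a' b' c')) :
    (∀ a b x y, R a x → R b x → R b y → R (m a a a) (m y y y)) ∧
    (∀ a b, (∃ x y, R a x ∧ R y x ∧ R y b) → R (m a a a) (m b b b)) := by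
  have zigzag : ∀ a b x y, R a x → R b x → R b y → R (m a a a) (m y y y) := fun _ _ _ _ ↦
    quasiMaltsev_zigzag_general (fun a b ↦ (hqm b a).2)
      (fun x y ↦ (hqm x y).1.trans (hqm x y).2)
      (fun _ _ ha _ _ hb _ _ hc ↦ hpres _ _ _ _ _ _ ha hb hc)
  exact ⟨zigzag, fun a b ⟨x, y, hax, hyx, hyb⟩ ↦ zigzag a y x b hax hyx hyb⟩
end

section
/- Let n ≥ 1 and let R ⊆ {0,1}^n be closed under coordinatewise ∧ and coordinatewise ∨ (i.e. x, y ∈ R imply x ∧ y ∈ R and x ∨ y ∈ R, computed coordinatewise). Then there exist sets Z, O ⊆ {1,…,n} and P ⊆ {1,…,n} × {1,…,n} such that R = { x ∈ {0,1}^n : x_i = 0 for all i ∈ Z, x_i = 1 for all i ∈ O, and x_i ≤ x_j for all (i,j) ∈ P }. In particular, every Boolean relation preserved by ∨ and ∧ is definable by a CNF formula that is both Horn and dual Horn. -/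
/-!
Take all constraints of the three kinds that hold throughout `R`. If `x` satisfies them, then for
any two coordinates `i` and `j` some `r i j ∈ R` is at least `x` at `i` and at most `x` at `j`,
since otherwise `R` would satisfy a constraint violated by `x`. For a nonempty finite set `s` of
coordinates, `⋁ i ∈ s, ⋀ j ∈ s, r i j` then belongs to `R` and agrees with `x` on `s`. When `R` is
closed in the product topology, which is automatic for finitely many coordinates, this gives
`x ∈ R`.
-/

section

variable {ι : Type*} {α : ι → Type*}

theorem exists_mem_forall_eq_of_forall_pair [∀ i, Lattice (α i)] {L : Set (∀ i, α i)}
    {x : ∀ i, α i} (hinf : InfClosed L) (hsup : SupClosed L) {s : Finset ι} (hs : s.Nonempty)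
    (hpair : ∀ i ∈ s, ∀ j ∈ s, ∃ r ∈ L, x i ≤ r i ∧ r j ≤ x j) :
    ∃ r ∈ L, ∀ k ∈ s, r k = x k := by
  have : Nonempty (∀ i, α i) := ⟨x⟩
  choose! r hrL hlower hupper using hpair
  refine ⟨s.sup' hs fun i => s.inf' hs (r i),
    hsup.finsetSup'_mem hs fun i hi => hinf.finsetInf'_mem hs (hrL i hi), fun k hk => ?_⟩
  simp only [Finset.sup'_apply, Finset.inf'_apply]
  apply le_antisymm
  · exact Finset.sup'_le hs _ fun i hi => Finset.inf'_le_of_le _ hk (hupper i hi k hk)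
  · exact Finset.le_sup'_of_le _ hk (Finset.le_inf' hs _ fun j hj => hlower k hk j hj)

theorem mem_of_isClosed_of_forall_finset [∀ i, TopologicalSpace (α i)]
    {S : Set (∀ i, α i)} {x : ∀ i, α i} (hS : IsClosed S)
    (hx : ∀ s : Finset ι, ∃ r ∈ S, ∀ k ∈ s, r k = x k) : x ∈ S := by
  by_contra hxS
  obtain ⟨s, u, hu, hsub⟩ := isOpen_pi_iff.mp hS.isOpen_compl x hxS
  obtain ⟨r, hrS, hrx⟩ := hx s
  exact hsub (fun i hi => hrx i hi ▸ (hu i hi).2) hrS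

theorem mem_of_isClosed_of_forall_pair [Nonempty ι] [∀ i, Lattice (α i)]
    [∀ i, TopologicalSpace (α i)] {L : Set (∀ i, α i)} {x : ∀ i, α i}
    (hL : IsClosed L) (hinf : InfClosed L) (hsup : SupClosed L)
    (hpair : ∀ i j, ∃ r ∈ L, x i ≤ r i ∧ r j ≤ x j) : x ∈ L := by
  classical
  refine mem_of_isClosed_of_forall_finset hL fun s => ?_
  obtain ⟨k⟩ := ‹Nonempty ι›
  obtain ⟨r, hrL, hrx⟩ := exists_mem_forall_eq_of_forall_pair hinf hsup (s.insert_nonempty k)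
    fun i _ j _ => hpair i j
  exact ⟨r, hrL, fun i hi => hrx i (Finset.mem_insert_of_mem hi)⟩

theorem exists_mem_le_and_le_of_constraints {R : Set (ι → Bool)} {x : ι → Bool}
    (hzero : ∀ i, (∀ r ∈ R, r i = false) → x i = false)
    (hone : ∀ i, (∀ r ∈ R, r i = true) → x i = true)
    (hle : ∀ i j, (∀ r ∈ R, r i ≤ r j) → x i ≤ x j) (i j : ι) :
    ∃ r ∈ R, x i ≤ r i ∧ r j ≤ x j := by
  have exists_true (k : ι) (hk : x k = true) : ∃ r ∈ R, r k = true := by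
    by_contra! h
    simpa [hk] using hzero k fun r hr => Bool.eq_false_of_not_eq_true (h r hr)
  have exists_false (k : ι) (hk : x k = false) : ∃ r ∈ R, r k = false := by
    by_contra! h
    simpa [hk] using hone k fun r hr => Bool.eq_true_of_not_eq_false (h r hr)
  cases hi : x i with
  | false =>
    cases hj : x j with
    | false =>
      obtain ⟨r, hr, hrj⟩ := exists_false j hj
      exact ⟨r, hr, Bool.false_le _, hrj.le⟩
    | true =>
      obtain ⟨r, hr, -⟩ := exists_true j hj
      exact ⟨r, hr, Bool.false_le _, Bool.le_true _⟩
  | true =>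
    cases hj : x j with
    | false =>
      have exists_lt : ∃ r ∈ R, r j < r i := by
        by_contra! h
        exact absurd (hi ▸ hj ▸ hle i j h) (by decide : ¬ true ≤ false)
      obtain ⟨r, hr, hlt⟩ := exists_lt
      obtain ⟨hrj, hri⟩ := Bool.lt_iff.mp hlt
      exact ⟨r, hr, hri.ge, hrj.le⟩
    | true =>
      obtain ⟨r, hr, hri⟩ := exists_true i hi
      exact ⟨r, hr, hri.ge, Bool.le_true _⟩

theorem lattice_closed_boolean_relation_general [Nonempty ι] {R : Set (ι → Bool)}
    (hR : IsClosed R) (hinf : InfClosed R) (hsup : SupClosed R) :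
    ∃ (Z O : Set ι) (P : Set (ι × ι)),
      R = {x : ι → Bool |
        (∀ i ∈ Z, x i = false) ∧ (∀ i ∈ O, x i = true) ∧
        ∀ p ∈ P, x p.1 ≤ x p.2} := by
  refine ⟨{i | ∀ r ∈ R, r i = false}, {i | ∀ r ∈ R, r i = true},
    {p | ∀ r ∈ R, r p.1 ≤ r p.2}, Set.Subset.antisymm ?_ ?_⟩
  · exact fun x hx => ⟨fun i hi => hi x hx, fun i hi => hi x hx, fun p hp => hp x hx⟩
  · rintro x ⟨hzero, hone, hle⟩
    exact mem_of_isClosed_of_forall_pair hR hinf hsup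
      (exists_mem_le_and_le_of_constraints hzero hone fun i j => hle (i, j))

end

/-- Theorem: every Boolean relation `R ⊆ {0,1}ⁿ` closed under coordinatewise `∧` and
coordinatewise `∨` is cut out by constraints of the forms `x i = 0`, `x i = 1` and
`x i ≤ x j`; in particular it is definable by a CNF formula that is both Horn and
dual Horn. -/
theorem lattice_closed_boolean_relation (n : ℕ) (hn : 1 ≤ n)
    (R : Set (Fin n → Bool))
    (hand : ∀ x ∈ R, ∀ y ∈ R, (fun i => x i && y i) ∈ R)
    (hor : ∀ x ∈ R, ∀ y ∈ R, (fun i => x i || y i) ∈ R) :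
    ∃ (Z O : Set (Fin n)) (P : Set (Fin n × Fin n)),
      R = {x : Fin n → Bool |
        (∀ i ∈ Z, x i = false) ∧ (∀ i ∈ O, x i = true) ∧
        ∀ p ∈ P, x p.1 ≤ x p.2} := by
  have : Nonempty (Fin n) := ⟨⟨0, hn⟩⟩
  exact lattice_closed_boolean_relation_general R.toFinite.isClosed
    (fun x hx y hy => hand x hx y hy) (fun x hx y hy => hor x hx y hy)
end
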